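/- Let b be a prime and t ≥ 0 an integer. Let D_1, D_2 be generating matrices of a digital (0,2)-sequence over F_b. Define infinite matrices E_1, E_2 over F_b by: E_1(i,r) = 0 for 1 ≤ r ≤ t and E_1(i,r) = D_1(i, r − t) for r > t; and E_2(i,r) = D_2(i,r) for i ≤ t and r ≤ t, E_2(i,r) = 0 for i ≤ t and r > t, E_2(i,r) = 0 for i > t and r ≤ t, and E_2(i,r) = D_2(i − t, r − t) for i > t and r > t. Then E_1, E_2 are generating matrices of a strict digital (t,2)-sequence over F_b: (a) for every integer m ≥ max{t,1} and all nonnegative integers d_1, d_2 with d_1 + d_2 = m − t, the first d_1 rows of E_1^{(m)} together with the first d_2 rows of E_2^{(m)} are linearly independent over F_b; and (b) if t ≥ 1 then ρ_t(E_1^{(t)}, E_2^{(t)}) = 0, since E_1^{(t)} is the zero matrix. -/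

import Mathlib

open Finset

/-- The family consisting of the first `d j` rows of each of the matrices `C j`
(a row index `≥ m` yields the zero vector). -/
def rowFamily {b s m : ℕ} (C : Fin s → Matrix (Fin m) (Fin m) (ZMod b))
    (d : Fin s → ℕ) : (Σ j : Fin s, Fin (d j)) → (Fin m → ZMod b) :=
  fun p r => if h : (p.2 : ℕ) < m then C p.1 ⟨(p.2 : ℕ), h⟩ r else 0

/-- The first `d j` rows of the matrices `C j` are linearly independent over `𝔽_b`. -/
def RowsLI {b s m : ℕ} (C : Fin s → Matrix (Fin m) (Fin m) (ZMod b))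
    (d : Fin s → ℕ) : Prop :=
  LinearIndependent (ZMod b) (rowFamily C d)

/-- The linear independence parameter `ρ_m(C_1, …, C_s)`: the largest `ρ` such that for
every choice of nonnegative integers `d_1 + ⋯ + d_s = ρ`, the corresponding first rows
of the matrices are linearly independent. -/
noncomputable def rho {b s m : ℕ} (C : Fin s → Matrix (Fin m) (Fin m) (ZMod b)) : ℕ :=
  sSup {ρ : ℕ | ∀ d : Fin s → ℕ, ∑ j, d j = ρ → RowsLI C d}

/-- Left upper `k × k` submatrix of an infinite matrix. -/
def upperLeft {b : ℕ} (C : Matrix ℕ ℕ (ZMod b)) (k : ℕ) :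
    Matrix (Fin k) (Fin k) (ZMod b) :=
  Matrix.of fun i r => C (i : ℕ) (r : ℕ)

/-- Column reduction with reduction index `w`: the first `m - min m w` columns are kept,
the last `min m w` columns are set to zero. -/
def colReduce {b m : ℕ} (C : Matrix (Fin m) (Fin m) (ZMod b)) (w : ℕ) :
    Matrix (Fin m) (Fin m) (ZMod b) :=
  Matrix.of fun i r => if (r : ℕ) < m - min m w then C i r else 0

/-- `C` is a family of generating matrices of a digital `(t,s)`-sequence over `𝔽_b`. -/
def IsDigitalSeq {b s : ℕ} (C : Fin s → Matrix ℕ ℕ (ZMod b)) (t : ℕ) : Prop :=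
  ∀ k : ℕ, max t 1 ≤ k → k - t ≤ rho (fun j => upperLeft (C j) k)

/-!
One of the new matrices is block diagonal, with blocks the left upper `t × t` submatrix of `D j₀`
and `D j₀` itself; every other `D j` is shifted to the right by `t` zero columns. Split the first
`t + n` columns into `t` and `n`. On the first `t` columns only the top `t` rows of the block
diagonal matrix survive, and they are the leading rows of `D j₀` on `t` columns; on the last `n`
columns all other rows are leading rows of the `D j`. Both families are independent because `D`
generates a digital `(0,s)`-sequence, so the block triangular family formed by all the rows is
independent. The shifted matrices vanish on their first `t` columns, whence strictness.
-/

section LinearIndependence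

variable {R M N ι : Type*} [Ring R] [AddCommGroup M] [AddCommGroup N] [Module R M] [Module R N]

lemma linearIndepOn_union_of_map_eq_zero {v : ι → M} {A B : Set ι} (f : M →ₗ[R] N)
    (hA : LinearIndepOn R v A) (hfA : ∀ i ∈ A, f (v i) = 0) (hB : LinearIndepOn R (f ∘ v) B) :
    LinearIndepOn R v (A ∪ B) := by
  have hker : Submodule.span R (v '' A) ≤ LinearMap.ker f :=
    Submodule.span_le.2 (Set.image_subset_iff.2 hfA)
  exact hA.union_of_quotient (LinearIndepOn.of_comp (Submodule.liftQ _ f hker) hB)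

end LinearIndependence

section Rho

variable {b s m : ℕ} {C : Fin s → Matrix (Fin m) (Fin m) (ZMod b)} {d d' : Fin s → ℕ}

lemma RowsLI.mono (hC : RowsLI C d') (hdd' : d ≤ d') : RowsLI C d :=
  LinearIndependent.comp hC (Sigma.map id fun j => Fin.castLE (hdd' j))
    (Function.injective_id.sigma_map fun j => Fin.castLE_injective (hdd' j))

lemma rowsLI_of_sum_eq_zero (hd : ∑ j, d j = 0) : RowsLI C d := by
  have : IsEmpty (Σ j, Fin (d j)) := ⟨fun p =>
    p.2.pos.ne' (Finset.sum_eq_zero_iff.1 hd p.1 (Finset.mem_univ p.1))⟩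
  exact linearIndependent_empty_type

lemma rowsLI_of_sum_eq_rho (hd : ∑ j, d j = rho C) : RowsLI C d := by
  by_cases hbdd : BddAbove {ρ : ℕ | ∀ d : Fin s → ℕ, ∑ j, d j = ρ → RowsLI C d}
  · have hne : {ρ : ℕ | ∀ d : Fin s → ℕ, ∑ j, d j = ρ → RowsLI C d}.Nonempty :=
      ⟨0, fun _ hd₀ => rowsLI_of_sum_eq_zero hd₀⟩
    exact Nat.sSup_mem hne hbdd d hd
  · exact rowsLI_of_sum_eq_zero (hd.trans (Nat.sSup_of_not_bddAbove hbdd))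

lemma rowsLI_of_sum_le_rho (hd : ∑ j, d j ≤ rho C) : RowsLI C d := by
  rcases isEmpty_or_nonempty (Fin s) with _ | ⟨⟨j⟩⟩
  · exact linearIndependent_empty_type
  · have hsum : ∑ i, (d + Pi.single j (rho C - ∑ k, d k) : Fin s → ℕ) i = rho C := by
      simp only [Pi.add_apply, Finset.sum_add_distrib, Finset.sum_pi_single', Finset.mem_univ,
        if_true]
      exact Nat.add_sub_of_le hd
    exact (rowsLI_of_sum_eq_rho hsum).mono le_self_add

lemma nontrivial_of_rho_pos (hC : 0 < rho C) : Nontrivial (ZMod b) := by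
  by_contra htriv
  have := not_nontrivial_iff_subsingleton.1 htriv
  -- Over the zero ring every `ρ` is admissible, and `sSup` of an unbounded set is `0`.
  have huniv : {ρ : ℕ | ∀ d : Fin s → ℕ, ∑ j, d j = ρ → RowsLI C d} = Set.univ :=
    Set.eq_univ_of_forall fun _ _ _ => linearIndependent_of_subsingleton
  rw [rho, huniv, Nat.sSup_of_not_bddAbove not_bddAbove_univ] at hC
  exact hC.false

lemma rho_eq_zero_of_eq_zero [Nontrivial (ZMod b)] {j : Fin s} (hj : C j = 0) : rho C = 0 := by
  refine Nat.le_zero.1 (csSup_le' fun ρ hρ => ?_)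
  by_contra! hpos
  have hli : RowsLI C (Pi.single j ρ) := hρ _ (by simp)
  refine LinearIndependent.ne_zero ⟨j, ⟨0, by simpa using hpos⟩⟩ hli ?_
  funext r
  simp [rowFamily, hj]

end Rho

section Rows

variable {b s m n : ℕ} {C D : Fin s → Matrix ℕ ℕ (ZMod b)} {d : Fin s → ℕ}

/-- The positions `(j, i)` of the first `d j` rows of each matrix of a family indexed by `j`. -/
def leadingRows {ι : Type*} (d : ι → ℕ) : Set (ι × ℕ) :=
  {p | p.2 < d p.1}

/-- Row `i` of the infinite matrix `C j`, for `p = (j, i)`, cut after its first `m` entries. Unlike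
in `rowFamily`, rows with index `≥ m` are not replaced by zero. -/
def truncRow (C : Fin s → Matrix ℕ ℕ (ZMod b)) (m : ℕ) (p : Fin s × ℕ) : Fin m → ZMod b :=
  fun r => C p.1 p.2 r

lemma rowsLI_upperLeft_iff (hd : ∀ j, d j ≤ m) :
    RowsLI (fun j => upperLeft (C j) m) d ↔
      LinearIndepOn (ZMod b) (truncRow C m) (leadingRows d) := by
  let e : (Σ j : Fin s, Fin (d j)) ≃ leadingRows d :=
    { toFun := fun p => ⟨(p.1, p.2), p.2.isLt⟩
      invFun := fun p => ⟨p.1.1, p.1.2, p.2⟩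
      left_inv := fun _ => rfl
      right_inv := fun _ => rfl }
  refine linearIndependent_equiv' e (funext fun p => funext fun r => ?_)
  have hp : (p.2 : ℕ) < m := p.2.isLt.trans_le (hd p.1)
  simp [e, rowFamily, truncRow, upperLeft, hp]

lemma IsDigitalSeq.linearIndepOn_truncRow (hD : IsDigitalSeq D 0) (hd : ∑ j, d j ≤ n) :
    LinearIndepOn (ZMod b) (truncRow D n) (leadingRows d) := by
  have hn : n ≤ rho (fun j => upperLeft (D j) n) := by
    rcases n.eq_zero_or_pos with rfl | hpos
    · exact Nat.zero_le _
    · exact hD n (max_le hpos.le hpos)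
  have hle : ∀ j, d j ≤ n := fun j =>
    (Finset.single_le_sum_of_canonicallyOrdered (Finset.mem_univ j)).trans hd
  exact (rowsLI_upperLeft_iff hle).1 (rowsLI_of_sum_le_rho (hd.trans hn))

lemma IsDigitalSeq.nontrivial (hD : IsDigitalSeq D 0) : Nontrivial (ZMod b) :=
  nontrivial_of_rho_pos (hD 1 le_rfl)

end Rows

section BlockShift

variable {b s n t : ℕ} {j₀ : Fin s} {D : Fin s → Matrix ℕ ℕ (ZMod b)} {d : Fin s → ℕ}

/-- The matrices of the construction: `D j₀` becomes the block diagonal matrix with blocks its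
left upper `t × t` submatrix and `D j₀` itself, and `t` zero columns are prepended to every other
`D j`. For `s = 2` and `j₀ = 1` these are `E_1, E_2`. -/
def blockShift (t : ℕ) (j₀ : Fin s) (D : Fin s → Matrix ℕ ℕ (ZMod b)) :
    Fin s → Matrix ℕ ℕ (ZMod b) :=
  fun j => Matrix.of fun i r =>
    if j = j₀ then
      if i < t then (if r < t then D j i r else 0) else (if r < t then 0 else D j (i - t) (r - t))
    else if r < t then 0 else D j i (r - t)

/-- The positions of the first `t` rows of the matrix `j₀`, that is, the rows through the left
upper block of `blockShift t j₀ D j₀`. -/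
def blockRows (t : ℕ) (j₀ : Fin s) : Set (Fin s × ℕ) :=
  {p | p.1 = j₀ ∧ p.2 < t}

/-- Sends a row position of `blockShift t j₀ D` outside `blockRows t j₀` to the position of the row
of `D` which it carries from column `t` on (columns are numbered from `0`). -/
def sourceRow (t : ℕ) (j₀ : Fin s) (p : Fin s × ℕ) : Fin s × ℕ :=
  (p.1, if p.1 = j₀ then p.2 - t else p.2)

lemma truncRow_blockShift_comp_castAdd_of_mem {p : Fin s × ℕ} (hp : p ∈ blockRows t j₀) :
    truncRow (blockShift t j₀ D) (t + n) p ∘ Fin.castAdd n = truncRow D t p := by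
  funext r
  simp [truncRow, blockShift, hp.1, hp.2]

lemma truncRow_blockShift_comp_castAdd_of_notMem {p : Fin s × ℕ} (hp : p ∉ blockRows t j₀) :
    truncRow (blockShift t j₀ D) (t + n) p ∘ Fin.castAdd n = 0 := by
  funext r
  have hlt : p.1 = j₀ → ¬p.2 < t := fun hj hi => hp ⟨hj, hi⟩
  simp +contextual [truncRow, blockShift, hlt]

lemma truncRow_blockShift_comp_natAdd_of_notMem {p : Fin s × ℕ} (hp : p ∉ blockRows t j₀) :
    truncRow (blockShift t j₀ D) (t + n) p ∘ Fin.natAdd t = truncRow D n (sourceRow t j₀ p) := by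
  funext r
  by_cases hj : p.1 = j₀
  · have hi : ¬p.2 < t := fun hi => hp ⟨hj, hi⟩
    simp [truncRow, blockShift, sourceRow, hj, hi]
  · simp [truncRow, blockShift, sourceRow, hj]

lemma sourceRow_injOn : Set.InjOn (sourceRow t j₀) (blockRows t j₀)ᶜ := by
  rintro ⟨j, i⟩ hp ⟨j', i'⟩ hp' h
  simp only [blockRows, sourceRow, Set.mem_compl_iff, Set.mem_ofPred_eq, Prod.mk.injEq]
    at hp hp' h ⊢
  grind

lemma sourceRow_mem_leadingRows {p : Fin s × ℕ} (hp : p ∈ leadingRows d) :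
    sourceRow t j₀ p ∈ leadingRows d := by
  have hle : (sourceRow t j₀ p).2 ≤ p.2 := by
    unfold sourceRow
    split_ifs
    exacts [Nat.sub_le _ _, le_rfl]
  exact hle.trans_lt hp

lemma blockRows_subset_leadingRows_single :
    blockRows t j₀ ⊆ leadingRows (Pi.single j₀ t) := by
  rintro ⟨_, i⟩ ⟨rfl, hi⟩
  simpa [leadingRows] using hi

lemma linearIndepOn_blockShift_blockRows (hD : IsDigitalSeq D 0) :
    LinearIndepOn (ZMod b)
      (LinearMap.funLeft (ZMod b) (ZMod b) (Fin.castAdd n) ∘ truncRow (blockShift t j₀ D) (t + n))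
      (blockRows t j₀) := by
  have hblock : LinearIndepOn (ZMod b) (truncRow D t) (blockRows t j₀) :=
    (hD.linearIndepOn_truncRow (by simp)).mono blockRows_subset_leadingRows_single
  exact hblock.congr fun p hp => (truncRow_blockShift_comp_castAdd_of_mem hp).symm

lemma linearIndepOn_blockShift_sdiff_blockRows (hD : IsDigitalSeq D 0) (hd : ∑ j, d j ≤ n) :
    LinearIndepOn (ZMod b) (truncRow (blockShift t j₀ D) (t + n))
      (leadingRows d \ blockRows t j₀) := by
  have hsource : LinearIndepOn (ZMod b) (truncRow D n ∘ sourceRow t j₀)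
      (leadingRows d \ blockRows t j₀) := by
    refine LinearIndepOn.comp_of_image ?_ (sourceRow_injOn.mono fun p hp => hp.2)
    refine (hD.linearIndepOn_truncRow hd).mono (Set.image_subset_iff.2 fun p hp => ?_)
    exact sourceRow_mem_leadingRows hp.1
  refine LinearIndepOn.of_comp (LinearMap.funLeft (ZMod b) (ZMod b) (Fin.natAdd t)) ?_
  exact hsource.congr fun p hp => (truncRow_blockShift_comp_natAdd_of_notMem hp.2).symm

lemma rowsLI_blockShift (hD : IsDigitalSeq D 0) (hd : ∑ j, d j ≤ n) :
    RowsLI (fun j => upperLeft (blockShift t j₀ D j) (t + n)) d := by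
  have hle : ∀ j, d j ≤ t + n := fun j =>
    (Finset.single_le_sum_of_canonicallyOrdered (Finset.mem_univ j)).trans
      (hd.trans (Nat.le_add_left n t))
  have hunion : LinearIndepOn (ZMod b) (truncRow (blockShift t j₀ D) (t + n))
      (leadingRows d \ blockRows t j₀ ∪ blockRows t j₀) :=
    linearIndepOn_union_of_map_eq_zero _ (linearIndepOn_blockShift_sdiff_blockRows hD hd)
      (fun p hp => truncRow_blockShift_comp_castAdd_of_notMem hp.2)
      (linearIndepOn_blockShift_blockRows hD)
  exact (rowsLI_upperLeft_iff hle).2 (hunion.mono (Set.subset_sdiff_union _ _))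

lemma upperLeft_blockShift_eq_zero {j : Fin s} (hj : j ≠ j₀) :
    upperLeft (blockShift t j₀ D j) t = 0 := by
  ext i r
  simp [upperLeft, blockShift, hj]

lemma eq_blockShift_one {D E : Fin 2 → Matrix ℕ ℕ (ZMod b)}
    (hE1 : ∀ i r : ℕ, E 0 i r = if r < t then 0 else D 0 i (r - t))
    (hE2 : ∀ i r : ℕ, E 1 i r =
      if i < t then (if r < t then D 1 i r else 0)
      else (if r < t then 0 else D 1 (i - t) (r - t))) :
    E = blockShift t 1 D := by
  funext j i r
  fin_cases j
  · simp [hE1, blockShift]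
  · simp [hE2, blockShift]

end BlockShift

theorem strict_t_seq_construction_general {b s : ℕ} (t : ℕ) (j₀ : Fin s)
    (D : Fin s → Matrix ℕ ℕ (ZMod b)) (hD : IsDigitalSeq D 0) :
    (∀ m : ℕ, t ≤ m → ∀ d : Fin s → ℕ, ∑ j, d j = m - t →
      RowsLI (fun j => upperLeft (blockShift t j₀ D j) m) d) ∧
    ∀ j ≠ j₀, rho (fun i => upperLeft (blockShift t j₀ D i) t) = 0 ∧
      upperLeft (blockShift t j₀ D j) t = 0 := by
  refine ⟨fun m hm d hd => ?_, fun j hj => ?_⟩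
  · obtain ⟨n, rfl⟩ := Nat.exists_eq_add_of_le hm
    exact rowsLI_blockShift hD (by omega)
  · have := hD.nontrivial
    have hzero := upperLeft_blockShift_eq_zero (t := t) (D := D) hj
    exact ⟨rho_eq_zero_of_eq_zero hzero, hzero⟩

/-- Remark 3 (construction): the matrices `E_1, E_2` built from a digital
`(0,2)`-sequence generate a strict digital `(t,2)`-sequence:
(a) for every `m ≥ max {t,1}` and all `d_1 + d_2 = m - t` the corresponding first rows
of `E_1^{(m)}` and `E_2^{(m)}` are linearly independent, and
(b) if `t ≥ 1` then `ρ_t(E_1^{(t)}, E_2^{(t)}) = 0`, since `E_1^{(t)}` is the zero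
matrix. -/
theorem strict_t_seq_construction {b t : ℕ} (hb : b.Prime)
    (D E : Fin 2 → Matrix ℕ ℕ (ZMod b))
    (hD : ∀ k : ℕ, 1 ≤ k → rho (fun j => upperLeft (D j) k) = k)
    (hE1 : ∀ i r : ℕ, E 0 i r = if r < t then 0 else D 0 i (r - t))
    (hE2 : ∀ i r : ℕ, E 1 i r =
      if i < t then (if r < t then D 1 i r else 0)
      else (if r < t then 0 else D 1 (i - t) (r - t))) :
    (∀ m : ℕ, max t 1 ≤ m → ∀ d : Fin 2 → ℕ, d 0 + d 1 = m - t →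
      RowsLI (fun j => upperLeft (E j) m) d) ∧
    (1 ≤ t → rho (fun j => upperLeft (E j) t) = 0 ∧ upperLeft (E 0) t = 0) := by
  obtain rfl := eq_blockShift_one hE1 hE2
  obtain ⟨hrows, hstrict⟩ :=
    strict_t_seq_construction_general t 1 D fun k hk => (hD k (le_of_max_le_right hk)).ge
  exact ⟨fun m hm d hd => hrows m (le_of_max_le_left hm) d ((Fin.sum_univ_two d).trans hd),
    fun _ => hstrict 0 zero_ne_one⟩
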